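/- The Feigin-Odesskii shuffle product preserves the degree truncation: if f ∈ ℂ[Y_1,...,Y_k]^{S_k} and g ∈ ℂ[Y_1,...,Y_l]^{S_l} each have degree strictly less than N in every variable, then f *^κ g ∈ ℂ[Y_1,...,Y_{k+l}]^{S_{k+l}} also has degree strictly less than N in every variable. -/

import Mathlib

open MvPolynomial Finset

/-- The field of rational functions in the variables `Y 1, …, Y k` over `ℂ`. -/
abbrev RatField (k : ℕ) : Type := FractionRing (MvPolynomial (Fin k) ℂ)

/-- The variable `Y i`, viewed in the field of rational functions. -/
noncomputable def Yv {k : ℕ} (i : Fin k) : RatField k :=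
  algebraMap (MvPolynomial (Fin k) ℂ) (RatField k) (X i)

/-- The substitution `Y i ↦ Y (e i)` along an injective map of variable sets. -/
noncomputable def embK {a b : ℕ} (e : Fin a → Fin b) (he : Function.Injective e) :
    RatField a →+* RatField b :=
  IsFractionRing.lift
    (g := (algebraMap (MvPolynomial (Fin b) ℂ) (RatField b)).comp (rename e).toRingHom)
    (by
      exact (IsFractionRing.injective (MvPolynomial (Fin b) ℂ) (RatField b)).comp
        (rename_injective _ he))

lemma castAdd_inj {k l : ℕ} : Function.Injective (Fin.castAdd l : Fin k → Fin (k + l)) :=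
  Fin.castAdd_injective k l

lemma natAdd_inj {k l : ℕ} : Function.Injective (Fin.natAdd k : Fin l → Fin (k + l)) := by
  intro x y h
  have := congrArg Fin.val h
  simp only [Fin.coe_natAdd] at this
  exact Fin.ext (by omega)

/-- The rational Feigin–Odesskii shuffle product. -/
noncomputable def shuffle (κ : ℂ) {k l : ℕ} (f : RatField k) (g : RatField l) :
    RatField (k + l) :=
  ((k.factorial * l.factorial : ℕ) : RatField (k + l))⁻¹ *
    ∑ σ : Equiv.Perm (Fin (k + l)),
      (∏ i : Fin k, ∏ j : Fin l,
        ((Yv (σ (Fin.castAdd l i)) - Yv (σ (Fin.natAdd k j)) +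
            algebraMap (MvPolynomial (Fin (k + l)) ℂ) (RatField (k + l)) (C κ)) /
          (Yv (σ (Fin.castAdd l i)) - Yv (σ (Fin.natAdd k j))))) *
        embK (fun i => σ (Fin.castAdd l i)) (σ.injective.comp castAdd_inj) f *
        embK (fun j => σ (Fin.natAdd k j)) (σ.injective.comp natAdd_inj) g

/-- The (signed) Vandermonde product `∏_{i<j} (v i - v j)`. -/
noncomputable def vd {R : Type*} [CommRing R] {n : ℕ} (v : Fin n → R) : R :=
  ∏ i, ∏ j, if i < j then v i - v j else 1

lemma vd_map {R S : Type*} [CommRing R] [CommRing S] {n : ℕ} (φ : R →+* S) (v : Fin n → R) :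
    φ (vd v) = vd (fun i => φ (v i)) := by
  simp only [vd, map_prod]
  refine prod_congr rfl fun i _ => prod_congr rfl fun j _ => ?_
  split_ifs <;> simp

lemma vd_eq_det {R : Type*} [CommRing R] {n : ℕ} (v : Fin n → R) :
    vd v = (Matrix.vandermonde (fun i => - v i)).det := by
  rw [Matrix.det_vandermonde, vd]
  refine prod_congr rfl fun i _ => ?_
  rw [← prod_filter]
  refine prod_congr ?_ fun j _ => by ring
  ext j; simp

lemma vd_perm {R : Type*} [CommRing R] {n : ℕ} (v : Fin n → R) (σ : Equiv.Perm (Fin n)) :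
    vd (fun i => v (σ i)) = ((Equiv.Perm.sign σ : ℤ) : R) * vd v := by
  rw [vd_eq_det, vd_eq_det, ← Matrix.det_permute]
  rfl

lemma vd_split {R : Type*} [CommRing R] {k l : ℕ} (v : Fin (k + l) → R) :
    vd v = vd (fun i => v (Fin.castAdd l i)) * vd (fun j => v (Fin.natAdd k j)) *
      ∏ i : Fin k, ∏ j : Fin l, (v (Fin.castAdd l i) - v (Fin.natAdd k j)) := by
  have h1 : ∀ (i : Fin k) (j : Fin l), Fin.castAdd l i < Fin.natAdd k j := by
    intro i j; simp only [Fin.lt_def, Fin.val_castAdd, Fin.val_natAdd]; omega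
  have h2 : ∀ (i : Fin k) (j : Fin l), ¬ Fin.natAdd k j < Fin.castAdd l i := by
    intro i j; exact not_lt.mpr (h1 i j).le
  have h3 : ∀ (i j : Fin k), Fin.castAdd l i < Fin.castAdd l j ↔ i < j := by
    intro i j; rw [Fin.lt_def, Fin.lt_def]; simp
  have h4 : ∀ (i j : Fin l), Fin.natAdd k i < Fin.natAdd k j ↔ i < j := by
    intro i j; rw [Fin.lt_def, Fin.lt_def]; simp
  simp only [vd, Fin.prod_univ_add, h1, h2, h3, h4, if_true, if_false, prod_mul_distrib,
    prod_const_one]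
  ring

lemma X_sub_X_ne {n : ℕ} {i j : Fin n} (h : i ≠ j) :
    (X i - X j : MvPolynomial (Fin n) ℂ) ≠ 0 := by
  intro h0
  exact h (X_injective (sub_eq_zero.mp h0))

lemma vd_X_ne {n : ℕ} : vd (X : Fin n → MvPolynomial (Fin n) ℂ) ≠ 0 := by
  rw [vd]
  refine prod_ne_zero_iff.mpr fun i _ => prod_ne_zero_iff.mpr fun j _ => ?_
  split_ifs with h
  · exact X_sub_X_ne h.ne
  · exact one_ne_zero

lemma degreeOf_X_sub_X {n : ℕ} {i j : Fin n} (h : i ≠ j) (m : Fin n) :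
    degreeOf m (X i - X j : MvPolynomial (Fin n) ℂ) =
      (if m = i then 1 else 0) + (if m = j then 1 else 0) := by
  have key : ∀ {i j : Fin n}, i ≠ j → degreeOf i (X i - X j : MvPolynomial (Fin n) ℂ) = 1 := by
    intro i j h
    rw [sub_eq_add_neg, degreeOf_add_eq_of_degreeOf_lt] <;>
    simp [degreeOf_neg, degreeOf_X_of_ne h]
  by_cases h1 : m = i
  · subst h1; simp [key h, h]
  by_cases h2 : m = j
  · subst h2
    rw [← neg_sub, degreeOf_neg, key h.symm]; simp [h1]
  · have := degreeOf_sub_le m (X i : MvPolynomial (Fin n) ℂ) (X j)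
    rw [degreeOf_X_of_ne h1, degreeOf_X_of_ne h2] at this
    simp [h1, h2]; simpa using this

lemma degreeOf_vd {n : ℕ} (m : Fin n) :
    degreeOf m (vd (X : Fin n → MvPolynomial (Fin n) ℂ)) = n - 1 := by
  have hne : ∀ i j : Fin n,
      (if i < j then X i - X j else 1 : MvPolynomial (Fin n) ℂ) ≠ 0 := by
    intro i j
    split_ifs with h
    · exact X_sub_X_ne h.ne
    · exact one_ne_zero
  rw [vd, degreeOf_prod_eq _ _ (fun i _ => prod_ne_zero_iff.mpr fun j _ => hne i j)]
  have h1 : ∀ i : Fin n, degreeOf m (∏ j, (if i < j then X i - X j else 1 :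
      MvPolynomial (Fin n) ℂ)) =
      ∑ j, ((if m = i then (if i < j then 1 else 0) else 0) +
        (if m = j then (if i < j then 1 else 0) else 0)) := by
    intro i
    rw [degreeOf_prod_eq _ _ (fun j _ => hne i j)]
    refine sum_congr rfl fun j _ => ?_
    by_cases h : i < j
    · simp only [h, if_true]; exact degreeOf_X_sub_X h.ne m
    · simp [h]
  simp only [h1, sum_add_distrib]
  have h2 : ∑ i : Fin n, ∑ j : Fin n, (if m = i then (if i < j then 1 else 0) else 0) =
      #(Ioi m) := by
    rw [sum_eq_single m (by intro b _ hb; simp [hb.symm]) (by simp)]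
    simp only [if_true, sum_boole]
    simp [Fin.card_Ioi, Finset.filter_lt_eq_Ioi]
  have h3 : ∑ i : Fin n, ∑ j : Fin n, (if m = j then (if i < j then 1 else 0) else 0) =
      #(Iio m) := by
    simp [Finset.filter_gt_eq_Iio]
  rw [h2, h3, Fin.card_Ioi, Fin.card_Iio]
  omega

lemma irred_X_sub_X {n : ℕ} {i j : Fin n} (h : i ≠ j) :
    Irreducible (X i - X j : MvPolynomial (Fin n) ℂ) := by
  apply irreducible_of_totalDegree_eq_one
  · apply le_antisymm
    · refine (totalDegree_sub _ _).trans ?_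
      simp
    · have := degreeOf_le_totalDegree (X i - X j : MvPolynomial (Fin n) ℂ) i
      rw [degreeOf_X_sub_X h] at this
      simp [h] at this
      exact this
  · intro x hx
    have := hx (Finsupp.single i 1)
    rw [coeff_sub, coeff_X, coeff_X, if_pos rfl] at this
    rw [if_neg] at this
    · simpa using this
    · intro h'
      exact h (Finsupp.single_left_injective one_ne_zero h').symm

lemma relPrime_X_sub_X {n : ℕ} {i j a b : Fin n} (h : i < j) (h' : a < b)
    (hne : (i, j) ≠ (a, b)) :
    IsRelPrime (X i - X j : MvPolynomial (Fin n) ℂ) (X a - X b) := by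
  rw [(irred_X_sub_X h.ne).isRelPrime_iff_not_dvd]
  rintro ⟨c, hc⟩
  have := congrArg (rename (fun x => if x = j then i else x)) hc
  simp only [map_sub, map_mul, rename_X, h.ne, if_true, if_false, sub_self, zero_mul] at this
  have h2 := X_injective (R := ℂ) (sub_eq_zero.mp this)
  have h3 : ¬ (i = a ∧ j = b) := by simpa using hne
  split_ifs at h2 <;> grind

lemma X_sub_X_dvd {n : ℕ} {i j : Fin n} (Q : MvPolynomial (Fin n) ℂ)
    (hQ : rename (Equiv.swap i j) Q = - Q) : (X i - X j) ∣ Q := by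
  set r : Fin n → Fin n := fun x => if x = j then i else x with hr
  have h1 : rename r Q = 0 := by
    have h := congrArg (rename r) hQ
    rw [rename_rename, map_neg] at h
    have hc : r ∘ (Equiv.swap i j) = r := by
      funext x
      simp only [hr, Function.comp, Equiv.swap_apply_def]
      split_ifs <;> grind
    rw [hc] at h
    exact self_eq_neg.mp h
  rw [← Ideal.mem_span_singleton, ← Ideal.Quotient.eq_zero_iff_mem]
  have h2 : (Ideal.Quotient.mkₐ ℂ (Ideal.span {(X i - X j : MvPolynomial (Fin n) ℂ)})).comp
      (rename r) = Ideal.Quotient.mkₐ ℂ _ := by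
    apply MvPolynomial.algHom_ext
    intro x
    simp only [AlgHom.comp_apply, rename_X, hr]
    split_ifs with hx
    · subst hx
      simp only [Ideal.Quotient.mkₐ_eq_mk]
      rw [Ideal.Quotient.eq]
      exact Ideal.mem_span_singleton_self _
    · rfl
  have h3 := DFunLike.congr_fun h2 Q
  simp only [AlgHom.comp_apply, h1, map_zero] at h3
  exact h3.symm

lemma vd_dvd {n : ℕ} (Q : MvPolynomial (Fin n) ℂ)
    (hQ : ∀ i j : Fin n, i ≠ j → rename (Equiv.swap i j) Q = - Q) :
    vd (X : Fin n → MvPolynomial (Fin n) ℂ) ∣ Q := by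
  have : vd (X : Fin n → MvPolynomial (Fin n) ℂ) =
      ∏ x ∈ (univ : Finset (Fin n × Fin n)).filter (fun x => x.1 < x.2), (X x.1 - X x.2) := by
    rw [prod_filter, vd, ← univ_product_univ, prod_product]
  rw [this]
  apply Finset.prod_dvd_of_isRelPrime
  · intro x hx y hy hxy
    simp only [coe_filter, mem_univ, true_and, Set.mem_ofPred_eq] at hx hy
    exact relPrime_X_sub_X hx hy hxy
  · intro x hx
    simp only [mem_filter, mem_univ, true_and] at hx
    exact X_sub_X_dvd Q (hQ _ _ hx.ne)

lemma degreeOf_rename_notMem {a b : ℕ} (e : Fin a → Fin b) (p : MvPolynomial (Fin a) ℂ)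
    (m : Fin b) (hm : ∀ i, e i ≠ m) : degreeOf m (rename e p) = 0 := by
  by_contra h
  have h1 : m ∈ (rename e p).vars := by
    classical
    rw [vars_def, Multiset.mem_toFinset, ← Multiset.count_ne_zero, ← degreeOf_def]
    exact h
  have := vars_rename e p h1
  simp at this
  obtain ⟨i, _, hi⟩ := this
  exact hm i hi

/-- The numerator. -/
noncomputable def numer (κ : ℂ) {k l : ℕ} (f : MvPolynomial (Fin k) ℂ)
    (g : MvPolynomial (Fin l) ℂ) : MvPolynomial (Fin (k + l)) ℂ :=
  (∏ i : Fin k, ∏ j : Fin l, (X (Fin.castAdd l i) - X (Fin.natAdd k j) + C κ)) *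
    rename (Fin.castAdd l) (vd X * f) * rename (Fin.natAdd k) (vd X * g)

lemma degreeOf_factor {n : ℕ} (κ : ℂ) {i j : Fin n} (h : i ≠ j) (m : Fin n) :
    degreeOf m (X i - X j + C κ : MvPolynomial (Fin n) ℂ) ≤
      (if m = i then 1 else 0) + (if m = j then 1 else 0) := by
  refine (degreeOf_add_le _ _ _).trans ?_
  rw [degreeOf_X_sub_X h, degreeOf_C]; simp

lemma degreeOf_numer (κ : ℂ) {N k l : ℕ} (f : MvPolynomial (Fin k) ℂ)
    (g : MvPolynomial (Fin l) ℂ)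
    (hf : ∀ i, f.degreeOf i < N) (hg : ∀ j, g.degreeOf j < N) (m : Fin (k + l)) :
    degreeOf m (numer κ f g) < (k + l - 1) + N := by
  have hne : ∀ (i : Fin k) (j : Fin l), Fin.castAdd l i ≠ Fin.natAdd k j := by
    intro i j h
    have := congrArg Fin.val h
    simp only [Fin.val_castAdd, Fin.val_natAdd] at this
    omega
  have hA : degreeOf m (∏ i : Fin k, ∏ j : Fin l,
      (X (Fin.castAdd l i) - X (Fin.natAdd k j) + C κ) : MvPolynomial (Fin (k + l)) ℂ) ≤
      ∑ i : Fin k, ∑ j : Fin l, ((if m = Fin.castAdd l i then 1 else 0) +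
        (if m = Fin.natAdd k j then 1 else 0)) :=
    (degreeOf_prod_le _ _ _).trans <| sum_le_sum fun i _ =>
      (degreeOf_prod_le _ _ _).trans <| sum_le_sum fun j _ => degreeOf_factor κ (hne i j) m
  refine lt_of_le_of_lt ((degreeOf_mul_le _ _ _).trans (add_le_add_left (degreeOf_mul_le _ _ _) _)) ?_
  induction m using Fin.addCases with
  | left i0 =>
    rw [degreeOf_rename_of_injective castAdd_inj,
      degreeOf_rename_notMem _ _ _ (fun j => (hne i0 j).symm)]
    have h1 := degreeOf_mul_le i0 (vd X) f
    rw [degreeOf_vd] at h1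
    have h2 := hf i0
    have h3 : degreeOf (Fin.castAdd l i0) (∏ i : Fin k, ∏ j : Fin l,
      (X (Fin.castAdd l i) - X (Fin.natAdd k j) + C κ) : MvPolynomial (Fin (k + l)) ℂ) ≤ l := by
      refine hA.trans (le_of_eq ?_)
      simp [hne, castAdd_inj.eq_iff, sum_add_distrib]
    have := i0.pos
    omega
  | right j0 =>
    rw [degreeOf_rename_of_injective natAdd_inj,
      degreeOf_rename_notMem _ _ _ (fun i => (hne i j0))]
    have h1 := degreeOf_mul_le j0 (vd X) g
    rw [degreeOf_vd] at h1
    have h2 := hg j0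
    have h3 : degreeOf (Fin.natAdd k j0) (∏ i : Fin k, ∏ j : Fin l,
      (X (Fin.castAdd l i) - X (Fin.natAdd k j) + C κ) : MvPolynomial (Fin (k + l)) ℂ) ≤ k := by
      refine hA.trans (le_of_eq ?_)
      simp [(hne _ _).symm, natAdd_inj.eq_iff, sum_add_distrib]
    have := j0.pos
    omega

/-- The antisymmetrised numerator. -/
noncomputable def anti {n : ℕ} (q : MvPolynomial (Fin n) ℂ) : MvPolynomial (Fin n) ℂ :=
  ∑ σ : Equiv.Perm (Fin n), ((Equiv.Perm.sign σ : ℤ) : MvPolynomial (Fin n) ℂ) * rename σ q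

lemma rename_anti {n : ℕ} (q : MvPolynomial (Fin n) ℂ) (τ : Equiv.Perm (Fin n)) :
    rename τ (anti q) = ((Equiv.Perm.sign τ : ℤ) : MvPolynomial (Fin n) ℂ) * anti q := by
  simp only [anti, map_sum, map_mul, map_intCast, rename_rename, mul_sum]
  refine Fintype.sum_equiv (Equiv.mulLeft τ) _ _ fun σ => ?_
  simp only [Equiv.coe_mulLeft, Equiv.Perm.sign_mul, Units.val_mul, Int.cast_mul,
    Equiv.Perm.coe_mul]
  rw [← mul_assoc, ← mul_assoc, ← Int.cast_mul, ← Units.val_mul, Int.units_mul_self]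
  simp

lemma degreeOf_anti {n d : ℕ} (q : MvPolynomial (Fin n) ℂ)
    (h : ∀ m, degreeOf m q < d) (m : Fin n) : degreeOf m (anti q) < d := by
  refine lt_of_le_of_lt (degreeOf_sum_le _ _ _) ?_
  rw [Finset.sup_lt_iff (lt_of_le_of_lt (Nat.zero_le _) (h m))]
  intro σ _
  rw [← map_intCast (C : ℂ →+* MvPolynomial (Fin n) ℂ)]
  refine lt_of_le_of_lt (degreeOf_C_mul_le _ _ _) ?_
  have := degreeOf_rename_of_injective (p := q) σ.injective (σ.symm m)
  rw [Equiv.apply_symm_apply] at this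
  rw [this]
  exact h _

lemma embK_algebraMap {a b : ℕ} (e : Fin a → Fin b) (he : Function.Injective e)
    (p : MvPolynomial (Fin a) ℂ) :
    embK e he (algebraMap _ _ p) = algebraMap _ _ (rename e p) := by
  unfold embK
  rw [IsFractionRing.lift_algebraMap]
  rfl

lemma term_eq (κ : ℂ) {k l : ℕ} (f : MvPolynomial (Fin k) ℂ) (g : MvPolynomial (Fin l) ℂ)
    (σ : Equiv.Perm (Fin (k + l))) :
    algebraMap (MvPolynomial (Fin (k + l)) ℂ) (RatField (k + l)) (vd X) *
    ((∏ i : Fin k, ∏ j : Fin l,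
        ((Yv (σ (Fin.castAdd l i)) - Yv (σ (Fin.natAdd k j)) +
            algebraMap (MvPolynomial (Fin (k + l)) ℂ) (RatField (k + l)) (C κ)) /
          (Yv (σ (Fin.castAdd l i)) - Yv (σ (Fin.natAdd k j))))) *
        embK (fun i => σ (Fin.castAdd l i)) (σ.injective.comp castAdd_inj)
          (algebraMap (MvPolynomial (Fin k) ℂ) (RatField k) f) *
        embK (fun j => σ (Fin.natAdd k j)) (σ.injective.comp natAdd_inj)
          (algebraMap (MvPolynomial (Fin l) ℂ) (RatField l) g)) =
    algebraMap (MvPolynomial (Fin (k + l)) ℂ) (RatField (k + l))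
      (((Equiv.Perm.sign σ : ℤ) : MvPolynomial (Fin (k + l)) ℂ) * rename σ (numer κ f g)) := by
  have hs : vd (X : Fin (k + l) → MvPolynomial (Fin (k + l)) ℂ) =
      ((Equiv.Perm.sign σ : ℤ) : MvPolynomial (Fin (k + l)) ℂ) *
        vd (fun i => (X (σ i) : MvPolynomial (Fin (k + l)) ℂ)) := by
    rw [vd_perm (X : Fin (k + l) → MvPolynomial (Fin (k + l)) ℂ) σ, ← mul_assoc,
      ← Int.cast_mul, ← Units.val_mul, Int.units_mul_self]
    simp
  have hD : (∏ i : Fin k, ∏ j : Fin l,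
      (Yv (σ (Fin.castAdd l i)) - Yv (σ (Fin.natAdd k j)) : RatField (k + l))) ≠ 0 := by
    refine prod_ne_zero_iff.mpr fun i _ => prod_ne_zero_iff.mpr fun j _ => ?_
    rw [Yv, Yv, ← map_sub]
    intro h
    rw [map_eq_zero_iff _ (IsFractionRing.injective _ _)] at h
    refine X_sub_X_ne (fun h' => ?_) h
    have := congrArg Fin.val (σ.injective h')
    simp only [Fin.val_castAdd, Fin.val_natAdd] at this
    omega
  have hk : rename (σ ∘ Fin.castAdd l) (vd (X : Fin k → MvPolynomial (Fin k) ℂ)) =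
      vd (fun i => (X (σ (Fin.castAdd l i)) : MvPolynomial (Fin (k + l)) ℂ)) := by
    have := vd_map (rename (R := ℂ) (fun i : Fin k => σ (Fin.castAdd l i))).toRingHom X
    simp at this; exact this
  have hl : rename (σ ∘ Fin.natAdd k) (vd (X : Fin l → MvPolynomial (Fin l) ℂ)) =
      vd (fun i => (X (σ (Fin.natAdd k i)) : MvPolynomial (Fin (k + l)) ℂ)) := by
    have := vd_map (rename (R := ℂ) (fun j : Fin l => σ (Fin.natAdd k j))).toRingHom X
    simp at this; exact this
  rw [embK_algebraMap, embK_algebraMap]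
  simp only [prod_div_distrib]
  rw [hs, vd_split]
  simp only [numer, map_mul, map_prod, map_add, map_sub, rename_X, rename_C, rename_rename,
    hk, hl]
  simp only [Yv] at hD ⊢
  field_simp
  rfl

/-- The Feigin–Odesskii shuffle product preserves the degree
truncation: if `f ∈ ℂ[Y₁,…,Y_k]^{S_k}` and `g ∈ ℂ[Y₁,…,Y_l]^{S_l}` each have degree
strictly less than `N` in every variable, then `f *^κ g` is a symmetric polynomial in
`k + l` variables of degree strictly less than `N` in every variable. -/
theorem statement8 (κ : ℂ) (N k l : ℕ)
    (f : MvPolynomial (Fin k) ℂ) (g : MvPolynomial (Fin l) ℂ)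
    (hf : f.IsSymmetric) (hg : g.IsSymmetric)
    (hfdeg : ∀ i : Fin k, f.degreeOf i < N) (hgdeg : ∀ j : Fin l, g.degreeOf j < N) :
    ∃ p : MvPolynomial (Fin (k + l)) ℂ,
      p.IsSymmetric ∧ (∀ i : Fin (k + l), p.degreeOf i < N) ∧
      shuffle κ (algebraMap (MvPolynomial (Fin k) ℂ) (RatField k) f)
          (algebraMap (MvPolynomial (Fin l) ℂ) (RatField l) g) =
        algebraMap (MvPolynomial (Fin (k + l)) ℂ) (RatField (k + l)) p := by
  obtain ⟨p, hp⟩ := vd_dvd (anti (numer κ f g)) (by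
    intro i j h
    rw [rename_anti, Equiv.Perm.sign_swap h]; simp)
  have hdeg := degreeOf_anti (numer κ f g) (degreeOf_numer κ f g hfdeg hgdeg)
  have hsym : p.IsSymmetric := by
    intro τ
    have h1 := rename_anti (numer κ f g) τ
    have h2 : rename τ (vd (X : Fin (k + l) → MvPolynomial (Fin (k + l)) ℂ)) =
        ((Equiv.Perm.sign τ : ℤ) : MvPolynomial (Fin (k + l)) ℂ) * vd X := by
      rw [← vd_perm]
      have := vd_map (rename (R := ℂ) τ).toRingHom X
      simpa using this
    rw [hp, map_mul, h2, ← mul_assoc] at h1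
    refine mul_left_cancel₀ (mul_ne_zero ?_ vd_X_ne) h1
    rcases Int.units_eq_one_or (Equiv.Perm.sign τ) with h | h <;> simp [h]
  have hpdeg : ∀ i, p.degreeOf i < N := by
    intro i
    have h := hdeg i
    by_cases h0 : p = 0
    · rw [hp] at h
      rw [h0, degreeOf_zero]
      induction i using Fin.addCases with
      | left i => exact lt_of_le_of_lt (Nat.zero_le _) (hfdeg i)
      | right j => exact lt_of_le_of_lt (Nat.zero_le _) (hgdeg j)
    · rw [hp, degreeOf_mul_eq vd_X_ne h0, degreeOf_vd] at h
      omega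
  refine ⟨C (((k.factorial * l.factorial : ℕ) : ℂ)⁻¹) * p, ?_, ?_, ?_⟩
  · intro τ
    rw [map_mul, rename_C, hsym τ]
  · intro i
    exact lt_of_le_of_lt (degreeOf_C_mul_le _ _ _) (hpdeg i)
  · have hv : algebraMap (MvPolynomial (Fin (k + l)) ℂ) (RatField (k + l)) (vd X) ≠ 0 := by
      rw [Ne, map_eq_zero_iff _ (IsFractionRing.injective _ _)]
      exact vd_X_ne
    have hfac : ((k.factorial * l.factorial : ℕ) : ℂ) ≠ 0 := by
      exact_mod_cast (Nat.mul_pos k.factorial_pos l.factorial_pos).ne'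
    have hc : algebraMap (MvPolynomial (Fin (k + l)) ℂ) (RatField (k + l))
        (C (((k.factorial * l.factorial : ℕ) : ℂ)⁻¹)) =
        ((k.factorial * l.factorial : ℕ) : RatField (k + l))⁻¹ := by
      apply eq_inv_of_mul_eq_one_left
      rw [← map_natCast (algebraMap (MvPolynomial (Fin (k + l)) ℂ) (RatField (k + l))),
        ← map_natCast (C : ℂ →+* MvPolynomial (Fin (k + l)) ℂ), ← map_mul, ← map_mul,
        inv_mul_cancel₀ hfac, map_one, map_one]
    rw [map_mul, hc, shuffle]
    congr 1
    apply mul_left_cancel₀ hv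
    rw [mul_sum, ← map_mul, ← hp, anti, map_sum]
    exact sum_congr rfl fun σ _ => term_eq κ f g σ
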